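/- (Rio's maximal inequality.) Let ξ₁, ξ₂, … be identically distributed real random variables on a probability space (Ω,𝓕,P) with E[ξ₁²] < ∞, and let α(n) be the n-th strong mixing coefficient of the sequence (ξ_i), with the convention α(0) := 1/4. Let G be the distribution function of |ξ₁|, set Ḡ := 1 − G, and let Ḡ^→(t) := sup{y ∈ ℝ₊ : Ḡ(y) > t} (with sup ∅ := 0) be the rightcontinuous inverse of Ḡ. Then for every x > 0 and every n ∈ ℕ: P[ max_{k=1,…,n} |∑_{i=1}^k (ξ_i − E[ξ₁])| ≥ 2x ] ≤ (16/x²) · n · ∑_{j=0}^{n−1} ∫₀^{2α(j)} Ḡ^→(t)² dt. -/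

import Mathlib

/-!
Writing a real variable as the integral over `u > 0` of its signed level indicators
`1{u < X} - 1{u < -X}` turns a covariance into a double integral of covariances of indicators, each
at most `2 * min (2 * a) (min P(|X| > u) P(|Y| > v))` when `X` and `Y` have mixing coefficient `a`.
For variables with the tail of `Z` the resulting double integral is the integral of the squared
inverse tail over `(0, 2 * a]`.

For partial sums `S k` of a sequence `x` with running maximum `M k`, completing the square gives
`M n ^ 2 ≤ 4 * S n ^ 2 - 4 * ∑ k < n, M k * x k`. Expanding `S n ^ 2` and
`M k = ∑ j < k, (M (j + 1) - M j)` leaves only products of centered variables, and of an increment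
of `M` with a later variable. The increment with index `j` depends on the first `j + 1` variables
and is bounded by `|x j|`, so the covariance inequality applies to it; the mean subtracted in `x j`
shifts its tail, which at most doubles the double integral. Markov's inequality for the squared
maxima of the sequence and of its negative concludes.
-/

open MeasureTheory Filter Topology

/-- The `n`-th strong mixing (α-mixing) coefficient of a sequence `ξ` under `P`. -/
noncomputable def mixingCoef {Ω E : Type*} [MeasurableSpace Ω] [MeasurableSpace E]
    (P : Measure Ω) (ξ : ℕ → Ω → E) (n : ℕ) : ℝ :=
  sSup {r : ℝ | ∃ k : ℕ, ∃ A B : Set Ω,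
    MeasurableSet[⨆ i ∈ Set.Iic k, MeasurableSpace.comap (ξ i) inferInstance] A ∧
    MeasurableSet[⨆ i ∈ Set.Ici (k + n), MeasurableSpace.comap (ξ i) inferInstance] B ∧
    r = |(P (A ∩ B)).toReal - (P A).toReal * (P B).toReal|}

section

open ProbabilityTheory Set
open scoped ENNReal

/-- The signed indicator `1{u < x} - 1{u < -x}`. Integrating it over the levels `u > 0` recovers
`x`, which reduces covariances of real variables to covariances of events. -/
noncomputable def signedLevel (u x : ℝ) : ℝ :=
  (Iio x).indicator 1 u - (Iio (-x)).indicator 1 u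

/-- The tail function `u ↦ P(|X| > u)`. -/
noncomputable def absTail {Ω : Type*} [MeasurableSpace Ω] (P : Measure Ω) (X : Ω → ℝ) (u : ℝ) :
    ℝ :=
  P.real {ω | u < |X ω|}

/-- The strong mixing coefficient of the σ-algebras `m₁` and `m₂` under `P` is at most `a`. -/
def MixingLE {Ω : Type*} (m₁ m₂ : MeasurableSpace Ω) {_mΩ : MeasurableSpace Ω} (P : Measure Ω)
    (a : ℝ) : Prop :=
  ∀ A B : Set Ω, MeasurableSet[m₁] A → MeasurableSet[m₂] B →
    |P.real (A ∩ B) - P.real A * P.real B| ≤ a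

lemma MixingLE.mono_left {Ω : Type*} {m₁ m₁' m₂ _mΩ : MeasurableSpace Ω} {P : Measure Ω} {a : ℝ}
    (h : MixingLE m₁ m₂ P a) (hm : m₁' ≤ m₁) : MixingLE m₁' m₂ P a :=
  fun A B hA hB => h A B (hm A hA) hB

lemma MixingLE.symm {Ω : Type*} {m₁ m₂ _mΩ : MeasurableSpace Ω} {P : Measure Ω} {a : ℝ}
    (h : MixingLE m₁ m₂ P a) : MixingLE m₂ m₁ P a := fun A B hA hB => by
  rw [inter_comm, mul_comm]
  exact h B A hB hA

section SignedLevel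

lemma measurable_signedLevel : Measurable fun p : ℝ × ℝ => signedLevel p.1 p.2 :=
  (measurable_one.indicator (measurableSet_lt measurable_fst measurable_snd)).sub
    (measurable_one.indicator (measurableSet_lt measurable_fst measurable_snd.neg))

lemma abs_signedLevel {u : ℝ} (hu : 0 ≤ u) (x : ℝ) :
    |signedLevel u x| = (Iio |x|).indicator 1 u := by
  rcases le_total 0 x with hx | hx
  · have : ¬ u < -x := by linarith
    by_cases h : u < x <;> simp [signedLevel, abs_of_nonneg hx, this, h]
  · have : ¬ u < x := by linarith
    by_cases h : u < -x <;> simp [signedLevel, abs_of_nonpos hx, this, h]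

lemma abs_signedLevel_le_one {u : ℝ} (hu : 0 ≤ u) (x : ℝ) : |signedLevel u x| ≤ 1 := by
  rw [abs_signedLevel hu]
  exact indicator_le_self' (fun _ _ => zero_le_one) u

lemma integrableOn_indicator_Iio (x : ℝ) :
    IntegrableOn ((Iio x).indicator (1 : ℝ → ℝ)) (Ioi 0) := by
  refine (integrable_indicator_iff measurableSet_Iio).2 (integrableOn_const ?_)
  rw [Measure.restrict_apply measurableSet_Iio, inter_comm, Ioi_inter_Iio]
  exact measure_Ioo_lt_top.ne

lemma setIntegral_indicator_Iio (x : ℝ) :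
    ∫ u in Ioi (0 : ℝ), (Iio x).indicator (1 : ℝ → ℝ) u = max x 0 := by
  rw [integral_indicator_one measurableSet_Iio, measureReal_restrict_apply measurableSet_Iio,
    inter_comm, Ioi_inter_Iio, Real.volume_real_Ioo, sub_zero]

lemma integrableOn_signedLevel (x : ℝ) : IntegrableOn (signedLevel · x) (Ioi 0) :=
  (integrableOn_indicator_Iio x).sub (integrableOn_indicator_Iio (-x))

lemma setIntegral_signedLevel (x : ℝ) : ∫ u in Ioi (0 : ℝ), signedLevel u x = x := by
  simp only [signedLevel]
  rw [integral_sub (integrableOn_indicator_Iio x) (integrableOn_indicator_Iio (-x)),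
    setIntegral_indicator_Iio, setIntegral_indicator_Iio]
  exact posPart_sub_negPart x

lemma setIntegral_abs_signedLevel (x : ℝ) : ∫ u in Ioi (0 : ℝ), |signedLevel u x| = |x| := by
  rw [setIntegral_congr_fun measurableSet_Ioi fun u hu => abs_signedLevel (le_of_lt hu) x,
    setIntegral_indicator_Iio, max_eq_left (abs_nonneg x)]

end SignedLevel

section Covariance

variable {Ω : Type*} [MeasurableSpace Ω] {P : Measure Ω} {X Y : Ω → ℝ}

lemma integral_abs_signedLevel (hX : Measurable X) {u : ℝ} (hu : 0 ≤ u) :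
    ∫ ω, |signedLevel u (X ω)| ∂P = absTail P X u := by
  simp only [abs_signedLevel hu]
  exact integral_indicator_one (s := {ω | u < |X ω|}) (measurableSet_lt measurable_const hX.abs)

variable [IsProbabilityMeasure P]

lemma covariance_eq_integral_mul_sub (hX : MemLp X 2 P) (hY : MemLp Y 2 P) :
    cov[X, Y; P] = ∫ ω, X ω * (Y ω - P[Y]) ∂P := by
  have hYi := hY.integrable one_le_two
  have hYc : MemLp (fun ω => Y ω - P[Y]) 2 P := hY.sub (memLp_const _)
  have hmean : ∫ ω, (Y ω - P[Y]) ∂P = 0 := by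
    rw [integral_sub hYi (integrable_const _), integral_const, probReal_univ, one_smul, sub_self]
  rw [← covariance_sub_const_right hYi P[Y], covariance_eq_sub hX hYc, hmean, mul_zero, sub_zero]
  rfl

lemma covariance_indicator_one {A B : Set Ω} (hA : MeasurableSet A) (hB : MeasurableSet B) :
    cov[A.indicator 1, B.indicator 1; P] = P.real (A ∩ B) - P.real A * P.real B := by
  have hmem {S : Set Ω} (hS : MeasurableSet S) : MemLp (S.indicator (1 : Ω → ℝ)) 2 P :=
    (memLp_const 1).indicator hS
  rw [covariance_eq_sub (hmem hA) (hmem hB),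
    ← inter_indicator_one, integral_indicator_one (hA.inter hB), integral_indicator_one hA,
    integral_indicator_one hB]

lemma abs_covariance_le_two_mul_integral_abs (hX : MemLp X 2 P) (hY : MemLp Y 2 P)
    (hY1 : ∀ ω, |Y ω| ≤ 1) : |cov[X, Y; P]| ≤ 2 * ∫ ω, |X ω| ∂P := by
  have hmean : |P[Y]| ≤ 1 := by
    simpa using norm_integral_le_of_norm_le_const (μ := P) (f := Y) (ae_of_all P hY1)
  rw [covariance_eq_integral_mul_sub hX hY, ← integral_const_mul, ← Real.norm_eq_abs]
  refine norm_integral_le_of_norm_le ((hX.integrable one_le_two).abs.const_mul 2)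
    (ae_of_all P fun ω => ?_)
  rw [norm_mul, mul_comm]
  have hcentered : ‖Y ω - P[Y]‖ ≤ 2 := (norm_sub_le _ _).trans
    ((add_le_add (hY1 ω) hmean).trans_eq one_add_one_eq_two)
  exact mul_le_mul_of_nonneg_right hcentered (norm_nonneg _)

lemma abs_measureReal_inter_sub_mul_le_quarter (A : Set Ω) {B : Set Ω} (hB : MeasurableSet B) :
    |P.real (A ∩ B) - P.real A * P.real B| ≤ 1 / 4 := by
  have hunion : P.real (A ∪ B) + P.real (A ∩ B) = P.real A + P.real B :=
    measureReal_union_add_inter hB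
  have hinter : 0 ≤ P.real (A ∩ B) := measureReal_nonneg
  have hA : P.real (A ∩ B) ≤ P.real A := measureReal_mono inter_subset_left
  have hB : P.real (A ∩ B) ≤ P.real B := measureReal_mono inter_subset_right
  have hone : P.real (A ∪ B) ≤ 1 := measureReal_le_one
  have hsplit : P.real (A ∩ B) - P.real A * P.real B =
      P.real (A ∩ B) * (1 - P.real (A ∪ B)) -
        (P.real A - P.real (A ∩ B)) * (P.real B - P.real (A ∩ B)) := by
    linear_combination P.real (A ∩ B) * hunion
  rw [hsplit, abs_le]
  constructor
  · nlinarith [sq_nonneg (P.real A - P.real B), mul_nonneg hinter (sub_nonneg.2 hone)]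
  · nlinarith [sq_nonneg (2 * P.real (A ∩ B) - 1), mul_nonneg (sub_nonneg.2 hA) (sub_nonneg.2 hB)]

lemma memLp_signedLevel (hX : Measurable X) {u : ℝ} (hu : 0 ≤ u) :
    MemLp (fun ω => signedLevel u (X ω)) 2 P :=
  .of_bound (measurable_signedLevel.comp (measurable_const.prodMk hX)).aestronglyMeasurable 1
    (ae_of_all P fun _ => abs_signedLevel_le_one hu _)

lemma abs_covariance_signedLevel_le_of_mixingLE (hX : Measurable X) (hY : Measurable Y) {a : ℝ}
    (hmix : MixingLE (.comap X inferInstance) (.comap Y inferInstance) P a) (u v : ℝ) :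
    |cov[fun ω => signedLevel u (X ω), fun ω => signedLevel v (Y ω); P]| ≤ 4 * a := by
  have hIoi (w : ℝ) : MeasurableSet {y : ℝ | w < y} := measurableSet_Ioi
  have hneg (w : ℝ) : MeasurableSet {y : ℝ | w < -y} := measurableSet_lt measurable_const
    measurable_neg
  have hmem {S : Set Ω} (hS : MeasurableSet S) : MemLp (S.indicator (1 : Ω → ℝ)) 2 P :=
    (memLp_const 1).indicator hS
  have hbound {S T : Set ℝ} (hS : MeasurableSet S) (hT : MeasurableSet T) :
      |cov[(X ⁻¹' S).indicator 1, (Y ⁻¹' T).indicator 1; P]| ≤ a := by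
    rw [covariance_indicator_one (hX hS) (hY hT)]
    exact hmix _ _ ⟨S, hS, rfl⟩ ⟨T, hT, rfl⟩
  have hexpand := covariance_sub_sub (μ := P) (hmem (hX (hIoi u))) (hmem (hX (hneg u)))
    (hmem (hY (hIoi v))) (hmem (hY (hneg v)))
  change cov[fun ω => signedLevel u (X ω), fun ω => signedLevel v (Y ω); P] = _ at hexpand
  rw [hexpand, abs_le]
  have hpp := abs_le.1 (hbound (hIoi u) (hIoi v))
  have hpn := abs_le.1 (hbound (hIoi u) (hneg v))
  have hnp := abs_le.1 (hbound (hneg u) (hIoi v))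
  have hnn := abs_le.1 (hbound (hneg u) (hneg v))
  constructor <;> linarith

lemma abs_covariance_signedLevel_le (hX : Measurable X) (hY : Measurable Y) {a : ℝ}
    (hmix : MixingLE (.comap X inferInstance) (.comap Y inferInstance) P a)
    {u v : ℝ} (hu : 0 ≤ u) (hv : 0 ≤ v) :
    |cov[fun ω => signedLevel u (X ω), fun ω => signedLevel v (Y ω); P]| ≤
      2 * min (2 * a) (min (absTail P X u) (absTail P Y v)) := by
  rw [mul_min_of_nonneg _ _ zero_le_two, mul_min_of_nonneg _ _ zero_le_two]
  refine le_min ?_ (le_min ?_ ?_)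
  · exact (abs_covariance_signedLevel_le_of_mixingLE hX hY hmix u v).trans_eq (by ring)
  · rw [← integral_abs_signedLevel hX hu]
    exact abs_covariance_le_two_mul_integral_abs (memLp_signedLevel hX hu)
      (memLp_signedLevel hY hv) fun _ => abs_signedLevel_le_one hv _
  · rw [← integral_abs_signedLevel hY hv, covariance_comm]
    exact abs_covariance_le_two_mul_integral_abs (memLp_signedLevel hY hv)
      (memLp_signedLevel hX hu) fun _ => abs_signedLevel_le_one hu _

lemma enorm_covariance_le_lintegral_signedLevel (hX : Measurable X) (hX2 : MemLp X 2 P)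
    (hY : MemLp Y 2 P) :
    ‖cov[X, Y; P]‖ₑ ≤ ∫⁻ u in Ioi 0, ‖cov[fun ω => signedLevel u (X ω), Y; P]‖ₑ := by
  have hYc : MemLp (fun ω => Y ω - P[Y]) 2 P := hY.sub (memLp_const _)
  have hint : Integrable (fun p : Ω × ℝ => signedLevel p.2 (X p.1) * (Y p.1 - P[Y]))
      (P.prod (volume.restrict (Ioi 0))) := by
    have hmeas : Measurable fun p : Ω × ℝ => signedLevel p.2 (X p.1) :=
      measurable_signedLevel.comp (measurable_snd.prodMk (hX.comp measurable_fst))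
    have hprod : AEStronglyMeasurable (fun p : Ω × ℝ => signedLevel p.2 (X p.1) * (Y p.1 - P[Y]))
        (P.prod (volume.restrict (Ioi 0))) := hmeas.aestronglyMeasurable.mul hYc.1.comp_fst
    refine (integrable_prod_iff hprod).2 ⟨?_, ?_⟩
    · exact ae_of_all P fun ω => (integrableOn_signedLevel (X ω)).mul_const (Y ω - P[Y])
    · simpa only [norm_mul, Real.norm_eq_abs, integral_mul_const, setIntegral_abs_signedLevel,
        Pi.mul_apply] using (hX2.integrable_mul hYc).norm
  calc ‖cov[X, Y; P]‖ₑ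
      = ‖∫ ω, (∫ u in Ioi (0 : ℝ), signedLevel u (X ω) * (Y ω - P[Y])) ∂P‖ₑ := by
        simp only [covariance_eq_integral_mul_sub hX2 hY, integral_mul_const,
          setIntegral_signedLevel]
    _ = ‖∫ u in Ioi (0 : ℝ), (∫ ω, signedLevel u (X ω) * (Y ω - P[Y]) ∂P)‖ₑ := by
        rw [integral_integral_swap hint]
    _ ≤ ∫⁻ u in Ioi 0, ‖∫ ω, signedLevel u (X ω) * (Y ω - P[Y]) ∂P‖ₑ :=
        enorm_integral_le_lintegral_enorm _
    _ = ∫⁻ u in Ioi 0, ‖cov[fun ω => signedLevel u (X ω), Y; P]‖ₑ :=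
        setLIntegral_congr_fun measurableSet_Ioi fun u hu => by
          rw [covariance_eq_integral_mul_sub (memLp_signedLevel hX (le_of_lt hu)) hY]

end Covariance

section Tail

/-- The integral of `min a (H u) (K v)` over positive levels `u`, `v`. With tail functions of two
random variables for `H` and `K` it controls their covariance. -/
noncomputable def tailOverlap (a : ℝ) (H K : ℝ → ℝ) : ℝ≥0∞ :=
  ∫⁻ u in Ioi 0, ∫⁻ v in Ioi 0, ENNReal.ofReal (min a (min (H u) (K v)))

/-- The right-continuous inverse `t ↦ sup {y ≥ 0 | t < H y}` of a tail function `H`, with value `0`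
where the set is empty or unbounded. -/
noncomputable def tailInverse (H : ℝ → ℝ) (t : ℝ) : ℝ :=
  sSup {y | 0 ≤ y ∧ t < H y}

lemma tailOverlap_mono {a : ℝ} {H H' K K' : ℝ → ℝ} (hH : ∀ u, H u ≤ H' u) (hK : ∀ v, K v ≤ K' v) :
    tailOverlap a H K ≤ tailOverlap a H' K' :=
  lintegral_mono fun u => lintegral_mono fun v =>
    ENNReal.ofReal_le_ofReal (min_le_min le_rfl (min_le_min (hH u) (hK v)))

lemma tailOverlap_le_tailOverlap_one (a : ℝ) {H : ℝ → ℝ} (hH : ∀ u, H u ≤ 1) (K : ℝ → ℝ) :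
    tailOverlap a H K ≤ tailOverlap 1 H K :=
  lintegral_mono fun u => lintegral_mono fun _ => ENNReal.ofReal_le_ofReal <|
    le_min ((min_le_right _ _).trans ((min_le_left _ _).trans (hH u))) (min_le_right _ _)

lemma lintegral_lintegral_measure_setOf_and {S T U : Type*} [MeasurableSpace S]
    [MeasurableSpace T] [MeasurableSpace U] {μ : Measure S} {ν : Measure T} {ρ : Measure U}
    [SFinite μ] [SFinite ν] [SFinite ρ] {D : Set (T × S)} {E : Set (T × U)}
    (hD : MeasurableSet D) (hE : MeasurableSet E) :
    ∫⁻ u, ∫⁻ v, ν {t | (t, u) ∈ D ∧ (t, v) ∈ E} ∂ρ ∂μ =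
      ∫⁻ t, μ {u | (t, u) ∈ D} * ρ {v | (t, v) ∈ E} ∂ν := by
  let F : Set (T × S × U) := {p | (p.1, p.2.1) ∈ D ∧ (p.1, p.2.2) ∈ E}
  have hF : MeasurableSet F :=
    (hD.preimage (measurable_fst.prodMk (measurable_fst.comp measurable_snd))).inter
      (hE.preimage (measurable_fst.prodMk (measurable_snd.comp measurable_snd)))
  calc ∫⁻ u, ∫⁻ v, ν {t | (t, u) ∈ D ∧ (t, v) ∈ E} ∂ρ ∂μ
      = ∫⁻ p, ν ((·, p) ⁻¹' F) ∂μ.prod ρ :=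
        (lintegral_prod _ (measurable_measure_prodMk_right hF).aemeasurable).symm
    _ = ν.prod (μ.prod ρ) F := (Measure.prod_apply_symm hF).symm
    _ = ∫⁻ t, μ {u | (t, u) ∈ D} * ρ {v | (t, v) ∈ E} ∂ν := by
        rw [Measure.prod_apply hF]
        exact lintegral_congr fun t => Measure.prod_prod {u | (t, u) ∈ D} {v | (t, v) ∈ E}

lemma volume_restrict_Ioc_setOf_lt_and_lt (a h k : ℝ) :
    volume.restrict (Ioc 0 a) {t | t < h ∧ t < k} = ENNReal.ofReal (min a (min h k)) := by
  have hset : {t : ℝ | t < h ∧ t < k} = Iio (min h k) := by ext; simp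
  rw [hset, measure_congr Iio_ae_eq_Iic, Measure.restrict_apply measurableSet_Iic, inter_comm,
    Ioc_inter_Iic, Real.volume_Ioc, sub_zero]

lemma tailInverse_nonneg (H : ℝ → ℝ) (t : ℝ) : 0 ≤ tailInverse H t :=
  Real.sSup_nonneg fun _ hy => hy.1

variable {H K : ℝ → ℝ}

lemma bddAbove_setOf_lt (hH : Tendsto H atTop (𝓝 0)) {t : ℝ} (ht : 0 < t) :
    BddAbove {y | 0 ≤ y ∧ t < H y} := by
  obtain ⟨b, hb⟩ := eventually_atTop.1 (hH.eventually_lt_const ht)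
  refine ⟨b, fun y hy => ?_⟩
  by_contra! hby
  exact lt_asymm hy.2 (hb y hby.le)

lemma antitoneOn_tailInverse (hH : Tendsto H atTop (𝓝 0)) : AntitoneOn (tailInverse H) (Ioi 0) :=
  fun _ hs _ _ hst => Real.sSup_le
    (fun _ hy => le_csSup (bddAbove_setOf_lt hH hs) ⟨hy.1, hst.trans_lt hy.2⟩)
    (tailInverse_nonneg H _)

lemma volume_restrict_Ioi_setOf_lt (hH : Antitone H) (hH0 : Tendsto H atTop (𝓝 0)) {t : ℝ}
    (ht : 0 < t) :
    volume.restrict (Ioi 0) {u | t < H u} = ENNReal.ofReal (tailInverse H t) := by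
  have hlower : Ioo 0 (tailInverse H t) ⊆ {u | t < H u} ∩ Ioi 0 := fun u hu => by
    have hne : {y | 0 ≤ y ∧ t < H y}.Nonempty := by
      by_contra hempty
      rw [not_nonempty_iff_eq_empty] at hempty
      have hu' := hu.1.trans hu.2
      rw [tailInverse, hempty, Real.sSup_empty] at hu'
      exact lt_irrefl _ hu'
    obtain ⟨y, hy, huy⟩ := exists_lt_of_lt_csSup hne hu.2
    exact ⟨hy.2.trans_le (hH huy.le), hu.1⟩
  have hupper : {u | t < H u} ∩ Ioi 0 ⊆ Ioc 0 (tailInverse H t) := fun u hu =>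
    ⟨hu.2, le_csSup (bddAbove_setOf_lt hH0 ht) ⟨le_of_lt hu.2, hu.1⟩⟩
  rw [Measure.restrict_apply (measurableSet_lt measurable_const hH.measurable)]
  refine le_antisymm ((measure_mono hupper).trans_eq ?_)
    (Eq.trans_le ?_ (measure_mono hlower)) <;> simp

lemma tailOverlap_eq_lintegral_tailInverse (a : ℝ) (hH : Antitone H)
    (hH0 : Tendsto H atTop (𝓝 0)) (hK : Antitone K) (hK0 : Tendsto K atTop (𝓝 0)) :
    tailOverlap a H K =
      ∫⁻ t in Ioc 0 a, ENNReal.ofReal (tailInverse H t) * ENNReal.ofReal (tailInverse K t) := by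
  simp only [tailOverlap, ← volume_restrict_Ioc_setOf_lt_and_lt]
  have hsubgraph {L : ℝ → ℝ} (hL : Antitone L) : MeasurableSet {p : ℝ × ℝ | p.1 < L p.2} :=
    measurableSet_lt measurable_fst (hL.measurable.comp measurable_snd)
  refine (lintegral_lintegral_measure_setOf_and (hsubgraph hH) (hsubgraph hK)).trans
    (setLIntegral_congr_fun measurableSet_Ioc fun t ht => ?_)
  exact congrArg₂ _ (volume_restrict_Ioi_setOf_lt hH hH0 ht.1)
    (volume_restrict_Ioi_setOf_lt hK hK0 ht.1)

lemma lintegral_min_comp_sub_le (hH : Antitone H) (hH1 : ∀ v, H v ≤ 1) {m c : ℝ} (hm : 0 ≤ m)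
    (hmH : ENNReal.ofReal m ≤ ∫⁻ v in Ioi 0, ENNReal.ofReal (H v)) (hc : c ≤ 1) :
    ∫⁻ v in Ioi 0, ENNReal.ofReal (min c (H (v - m))) ≤
      2 * ∫⁻ v in Ioi 0, ENNReal.ofReal (min c (H v)) := by
  have hlow : ∫⁻ v in Ioc 0 m, ENNReal.ofReal (min c (H (v - m))) ≤
      ∫⁻ v in Ioi 0, ENNReal.ofReal (min c (H v)) :=
    calc ∫⁻ v in Ioc 0 m, ENNReal.ofReal (min c (H (v - m)))
        ≤ ∫⁻ _ in Ioc 0 m, ENNReal.ofReal c :=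
          lintegral_mono fun _ => ENNReal.ofReal_le_ofReal (min_le_left _ _)
      _ = ENNReal.ofReal c * ENNReal.ofReal m := by
          rw [setLIntegral_const, Real.volume_Ioc, sub_zero]
      _ ≤ ENNReal.ofReal c * ∫⁻ v in Ioi 0, ENNReal.ofReal (H v) := by gcongr
      _ = ∫⁻ v in Ioi 0, ENNReal.ofReal c * ENNReal.ofReal (H v) :=
          (lintegral_const_mul _ hH.measurable.ennreal_ofReal).symm
      _ ≤ ∫⁻ v in Ioi 0, ENNReal.ofReal (min c (H v)) := lintegral_mono fun v => by
          rw [ENNReal.ofReal_min]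
          exact le_min (mul_le_of_le_one_right' (ENNReal.ofReal_le_one.2 (hH1 v)))
            (mul_le_of_le_one_left' (ENNReal.ofReal_le_one.2 hc))
  have hhigh : ∫⁻ v in Ioi m, ENNReal.ofReal (min c (H (v - m))) =
      ∫⁻ v in Ioi 0, ENNReal.ofReal (min c (H v)) := by
    have h := (measurePreserving_sub_right volume m).setLIntegral_comp_preimage
      (f := fun v => ENNReal.ofReal (min c (H v))) measurableSet_Ioi
      (measurable_const.min hH.measurable).ennreal_ofReal (s := Ioi 0)
    rwa [preimage_sub_const_Ioi, zero_add] at h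
  rw [← Ioc_union_Ioi_eq_Ioi hm, two_mul]
  refine (lintegral_union_le _ _ _).trans ?_
  rw [Ioc_union_Ioi_eq_Ioi hm, hhigh]
  gcongr

lemma tailOverlap_comp_sub_le (a : ℝ) (hH : Antitone H) (hH1 : ∀ v, H v ≤ 1) {m : ℝ} (hm : 0 ≤ m)
    (hmH : ENNReal.ofReal m ≤ ∫⁻ v in Ioi 0, ENNReal.ofReal (H v)) :
    tailOverlap a H (fun v => H (v - m)) ≤ 2 * tailOverlap a H H := by
  simp only [tailOverlap, ← min_assoc]
  rw [← lintegral_const_mul' _ _ ENNReal.ofNat_ne_top]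
  exact lintegral_mono fun u =>
    lintegral_min_comp_sub_le hH hH1 hm hmH ((min_le_right _ _).trans (hH1 u))

end Tail

section AbsTail

variable {Ω : Type*} [MeasurableSpace Ω] {P : Measure Ω} {X Y : Ω → ℝ}

lemma absTail_congr {Ω' : Type*} [MeasurableSpace Ω'] {P' : Measure Ω'} {Z : Ω' → ℝ}
    (hXZ : IdentDistrib X Z P P') : absTail P X = absTail P' Z :=
  funext fun _ => congrArg ENNReal.toReal
    (hXZ.measure_mem_eq (measurableSet_lt measurable_const measurable_abs))

variable [IsProbabilityMeasure P]

lemma antitone_absTail : Antitone (absTail P X) :=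
  fun _ _ huv => measureReal_mono fun _ => huv.trans_lt

lemma absTail_le_one (u : ℝ) : absTail P X u ≤ 1 :=
  measureReal_le_one

lemma ofReal_absTail (u : ℝ) : ENNReal.ofReal (absTail P X u) = P {ω | u < |X ω|} :=
  ofReal_measureReal

lemma absTail_le_absTail_sub {m : ℝ} (hYX : ∀ ω, |Y ω| ≤ |X ω| + m) (v : ℝ) :
    absTail P Y v ≤ absTail P X (v - m) :=
  measureReal_mono fun ω hω => sub_lt_iff_lt_add.2 (lt_of_lt_of_le hω (hYX ω))

lemma one_sub_measureReal_map_abs_Iic (hX : Measurable X) (y : ℝ) :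
    1 - (P.map fun ω => |X ω|).real (Iic y) = absTail P X y := by
  rw [map_measureReal_apply hX.abs measurableSet_Iic,
    ← probReal_compl_eq_one_sub (hX.abs measurableSet_Iic), ← preimage_compl, compl_Iic]
  rfl

lemma tendsto_absTail_atTop (hX : Measurable X) : Tendsto (absTail P X) atTop (𝓝 0) := by
  have := Measure.isProbabilityMeasure_map (μ := P) hX.abs.aemeasurable
  have h := (tendsto_cdf_atTop (P.map fun ω => |X ω|)).const_sub 1
  simpa only [cdf_eq_real, one_sub_measureReal_map_abs_Iic hX, sub_self] using h

lemma ofReal_abs_integral_le_lintegral_absTail (hX : Measurable X) :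
    ENNReal.ofReal |∫ ω, X ω ∂P| ≤ ∫⁻ u in Ioi 0, ENNReal.ofReal (absTail P X u) := by
  simp only [ofReal_absTail]
  rw [← lintegral_eq_lintegral_meas_lt P (ae_of_all P fun _ => abs_nonneg _) hX.abs.aemeasurable,
    ← Real.enorm_eq_ofReal_abs]
  simpa only [Real.enorm_eq_ofReal_abs] using enorm_integral_le_lintegral_enorm X

lemma tailOverlap_one_absTail (hX : Measurable X) :
    tailOverlap 1 (absTail P X) (absTail P X) = ∫⁻ ω, ENNReal.ofReal (X ω ^ 2) ∂P := by
  have hmin (u v : ℝ) : ENNReal.ofReal (min 1 (min (absTail P X u) (absTail P X v))) =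
      P {ω | u < |X ω| ∧ v < |X ω|} := by
    rw [min_eq_right ((min_le_left _ _).trans (absTail_le_one u)),
      ← antitone_absTail.map_max, ofReal_absTail]
    simp only [max_lt_iff]
  have hlevel (x : ℝ) : volume.restrict (Ioi 0) {u | u < |x|} = ENNReal.ofReal |x| := by
    change volume.restrict (Ioi 0) (Iio |x|) = _
    rw [Measure.restrict_apply measurableSet_Iio, inter_comm, Ioi_inter_Iio, Real.volume_Ioo,
      sub_zero]
  have hsubgraph : MeasurableSet {p : Ω × ℝ | p.2 < |X p.1|} :=
    measurableSet_lt measurable_snd (hX.comp measurable_fst).abs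
  simp only [tailOverlap, hmin]
  refine (lintegral_lintegral_measure_setOf_and hsubgraph hsubgraph).trans
    (lintegral_congr fun ω => ?_)
  change volume.restrict (Ioi 0) {u | u < |X ω|} * volume.restrict (Ioi 0) {u | u < |X ω|} = _
  rw [hlevel, ← sq, ← ENNReal.ofReal_pow (abs_nonneg _), sq_abs]

lemma memLp_two_iff_tailOverlap_lt_top (hX : Measurable X) :
    MemLp X 2 P ↔ tailOverlap 1 (absTail P X) (absTail P X) < ∞ := by
  rw [memLp_two_iff_integrable_sq hX.aestronglyMeasurable, tailOverlap_one_absTail hX,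
    ← hasFiniteIntegral_iff_ofReal (ae_of_all P fun ω => sq_nonneg (X ω))]
  exact ⟨fun h => h.2, fun h => ⟨(hX.pow_const 2).aestronglyMeasurable, h⟩⟩

lemma tailOverlap_absTail_self (hX : Measurable X) (hX2 : MemLp X 2 P) (a : ℝ) :
    tailOverlap a (absTail P X) (absTail P X) =
      ENNReal.ofReal (∫ t in Ioc 0 a, tailInverse (absTail P X) t ^ 2) := by
  have htend := tendsto_absTail_atTop (P := P) hX
  have hoverlap : tailOverlap a (absTail P X) (absTail P X) =
      ∫⁻ t in Ioc 0 a, ENNReal.ofReal (tailInverse (absTail P X) t ^ 2) := by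
    rw [tailOverlap_eq_lintegral_tailInverse a antitone_absTail htend antitone_absTail htend]
    simp only [← sq, ENNReal.ofReal_pow (tailInverse_nonneg _ _)]
  have hmeas : AEMeasurable (tailInverse (absTail P X)) (volume.restrict (Ioc 0 a)) :=
    aemeasurable_restrict_of_antitoneOn measurableSet_Ioc
      ((antitoneOn_tailInverse htend).mono Ioc_subset_Ioi_self)
  have hnonneg : 0 ≤ᵐ[volume.restrict (Ioc 0 a)] fun t => tailInverse (absTail P X) t ^ 2 :=
    ae_of_all _ fun t => sq_nonneg _
  have hfin : ∫⁻ t in Ioc 0 a, ENNReal.ofReal (tailInverse (absTail P X) t ^ 2) < ∞ :=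
    hoverlap ▸ (tailOverlap_le_tailOverlap_one a absTail_le_one _).trans_lt
      ((memLp_two_iff_tailOverlap_lt_top hX).1 hX2)
  rw [hoverlap, ofReal_integral_eq_lintegral_ofReal
    ⟨(hmeas.pow_const 2).aestronglyMeasurable, (hasFiniteIntegral_iff_ofReal hnonneg).2 hfin⟩
    hnonneg]

theorem enorm_covariance_le_tailOverlap (hX : Measurable X) (hX2 : MemLp X 2 P)
    (hY : Measurable Y) (hY2 : MemLp Y 2 P) {a : ℝ}
    (hmix : MixingLE (.comap X inferInstance) (.comap Y inferInstance) P a) :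
    ‖cov[X, Y; P]‖ₑ ≤ 2 * tailOverlap (2 * a) (absTail P X) (absTail P Y) := by
  simp only [tailOverlap, ← lintegral_const_mul' _ _ ENNReal.ofNat_ne_top]
  refine (enorm_covariance_le_lintegral_signedLevel hX hX2 hY2).trans
    (setLIntegral_mono' measurableSet_Ioi fun u hu => ?_)
  rw [covariance_comm]
  have hlevel := memLp_signedLevel (P := P) hX (le_of_lt hu)
  refine (enorm_covariance_le_lintegral_signedLevel hY hY2 hlevel).trans
    (setLIntegral_mono' measurableSet_Ioi fun v hv => ?_)
  rw [covariance_comm, Real.enorm_eq_ofReal_abs, ← ENNReal.ofReal_ofNat 2,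
    ← ENNReal.ofReal_mul zero_le_two]
  exact ENNReal.ofReal_le_ofReal
    (abs_covariance_signedLevel_le hX hY hmix (le_of_lt hu) (le_of_lt hv))

end AbsTail

section MaxPartialSum

/-- The maximum of the partial sums `x 0 + ⋯ + x (k - 1)` over `0 ≤ k ≤ n`; it is nonnegative since
the empty sum is included. -/
noncomputable def maxPartialSum (x : ℕ → ℝ) (n : ℕ) : ℝ :=
  partialSups (fun k => ∑ i ∈ Finset.range k, x i) n

variable (x : ℕ → ℝ)

lemma maxPartialSum_zero : maxPartialSum x 0 = 0 := by
  simp [maxPartialSum]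

lemma maxPartialSum_succ (n : ℕ) :
    maxPartialSum x (n + 1) = max (maxPartialSum x n) (∑ i ∈ Finset.range (n + 1), x i) :=
  partialSups_add_one _ _

lemma sum_range_le_maxPartialSum {k n : ℕ} (hkn : k ≤ n) :
    ∑ i ∈ Finset.range k, x i ≤ maxPartialSum x n :=
  le_partialSups_of_le (fun k => ∑ i ∈ Finset.range k, x i) hkn

lemma abs_maxPartialSum_succ_sub_le (n : ℕ) :
    |maxPartialSum x (n + 1) - maxPartialSum x n| ≤ |x n| := by
  rw [maxPartialSum_succ, abs_of_nonneg (sub_nonneg.2 (le_max_left _ _)), sub_le_iff_le_add,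
    Finset.sum_range_succ]
  refine max_le (le_add_of_nonneg_left (abs_nonneg _)) ?_
  linarith [sum_range_le_maxPartialSum x le_rfl (k := n), le_abs_self (x n)]

lemma maxPartialSum_eq_sum_increments (n : ℕ) :
    maxPartialSum x n =
      ∑ j ∈ Finset.range n, (maxPartialSum x (j + 1) - maxPartialSum x j) := by
  rw [Finset.sum_range_sub, maxPartialSum_zero, sub_zero]

lemma sq_maxPartialSum_le_two_mul (n : ℕ) :
    maxPartialSum x n ^ 2 ≤ 2 * (∑ i ∈ Finset.range n, x i) * maxPartialSum x n -
      2 * ∑ k ∈ Finset.range n, maxPartialSum x k * x k := by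
  induction n with
  | zero => simp [maxPartialSum_zero]
  | succ n ih =>
    rw [Finset.sum_range_succ (fun k => maxPartialSum x k * x k), maxPartialSum_succ,
      Finset.sum_range_succ]
    rcases le_total (maxPartialSum x n) (∑ i ∈ Finset.range n, x i + x n) with h | h
    · rw [max_eq_right h]
      nlinarith [sq_nonneg (maxPartialSum x n - (∑ i ∈ Finset.range n, x i + x n))]
    · rw [max_eq_left h]
      linarith

lemma sq_sum_range (n : ℕ) :
    (∑ i ∈ Finset.range n, x i) ^ 2 =
      ∑ k ∈ Finset.range n, (x k ^ 2 + 2 * ((∑ i ∈ Finset.range k, x i) * x k)) := by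
  induction n with
  | zero => simp
  | succ n ih =>
    rw [Finset.sum_range_succ, Finset.sum_range_succ _ n, ← ih]
    ring

lemma sq_maxPartialSum_le (n : ℕ) :
    maxPartialSum x n ^ 2 ≤ 4 * ∑ k ∈ Finset.range n,
      (x k ^ 2 + 2 * ((∑ i ∈ Finset.range k, x i) * x k) - maxPartialSum x k * x k) := by
  rw [Finset.sum_sub_distrib, ← sq_sum_range]
  linarith [sq_maxPartialSum_le_two_mul x n,
    sq_nonneg (maxPartialSum x n - 2 * ∑ i ∈ Finset.range n, x i)]

lemma sum_range_comp_sub_le {c : ℕ → ℝ} (hc : ∀ d, 0 ≤ c d) {k n : ℕ} (hk : k < n) :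
    c 0 + ∑ j ∈ Finset.range k, c (k - j) ≤ ∑ d ∈ Finset.range n, c d := by
  calc c 0 + ∑ j ∈ Finset.range k, c (k - j)
      = ∑ j ∈ Finset.range (k + 1), c (k - j) := by
        rw [Finset.sum_range_succ, Nat.sub_self, add_comm]
    _ = ∑ d ∈ Finset.range (k + 1), c d := by
        simpa using Finset.sum_range_reflect c (k + 1)
    _ ≤ ∑ d ∈ Finset.range n, c d :=
        Finset.sum_le_sum_of_subset_of_nonneg (Finset.range_mono hk) fun _ _ _ => hc _

variable {Ω : Type*} {X : ℕ → Ω → ℝ}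

lemma measurable_maxPartialSum {mΩ : MeasurableSpace Ω} {n : ℕ} (hX : ∀ i < n, Measurable (X i)) :
    Measurable fun ω => maxPartialSum (X · ω) n := by
  induction n with
  | zero => simp only [maxPartialSum_zero, measurable_const]
  | succ n ih =>
    simp only [maxPartialSum_succ]
    exact (ih fun i hi => hX i (hi.trans n.lt_succ_self)).max
      (Finset.measurable_fun_sum _ fun i hi => hX i (Finset.mem_range.1 hi))

lemma measurable_maxPartialSum_increment (X : ℕ → Ω → ℝ) (b : ℕ → ℝ) (j : ℕ) :
    Measurable[⨆ i ∈ Iic j, .comap (X i) inferInstance] fun ω =>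
      maxPartialSum (fun i => X i ω - b i) (j + 1) - maxPartialSum (fun i => X i ω - b i) j := by
  let past : MeasurableSpace Ω := ⨆ i ∈ Iic j, .comap (X i) inferInstance
  have hpast : ∀ i < j + 1, Measurable fun ω => X i ω - b i := fun i hi =>
    ((comap_measurable (X i)).mono (le_iSup₂_of_le (f := fun i (_ : i ∈ Iic j) =>
      MeasurableSpace.comap (X i) inferInstance) i (Nat.lt_succ_iff.1 hi) le_rfl)
      le_rfl).sub_const _
  exact (measurable_maxPartialSum hpast).sub
    (measurable_maxPartialSum fun i hi => hpast i (hi.trans j.lt_succ_self))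

variable {mΩ : MeasurableSpace Ω} {P : Measure Ω}

lemma memLp_maxPartialSum {p : ℝ≥0∞} (hX : ∀ i, MemLp (X i) p P) (n : ℕ) :
    MemLp (fun ω => maxPartialSum (X · ω) n) p P := by
  induction n with
  | zero => simp only [maxPartialSum_zero, MemLp.zero']
  | succ n ih =>
    simp only [maxPartialSum_succ]
    exact ih.sup (memLp_finsetSum _ fun i _ => hX i)

lemma integral_sum_mul {ι : Type*} {s : Finset ι} {F : ι → Ω → ℝ} {Y : Ω → ℝ}
    (hF : ∀ i ∈ s, MemLp (F i) 2 P) (hY : MemLp Y 2 P) :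
    ∫ ω, (∑ i ∈ s, F i ω) * Y ω ∂P = ∑ i ∈ s, ∫ ω, F i ω * Y ω ∂P := by
  have hint : ∀ i ∈ s, Integrable (fun ω => F i ω * Y ω) P := fun i hi =>
    (hF i hi).integrable_mul hY
  simp only [Finset.sum_mul]
  exact integral_finsetSum s hint

lemma integral_sq_maxPartialSum_le_of_integral_terms_le (hX : ∀ i, MemLp (X i) 2 P) {n : ℕ} {b : ℝ}
    (hb : ∀ k < n, ∫ ω, X k ω ^ 2 ∂P + 2 * ∫ ω, (∑ i ∈ Finset.range k, X i ω) * X k ω ∂P -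
      ∫ ω, maxPartialSum (X · ω) k * X k ω ∂P ≤ b) :
    ∫ ω, maxPartialSum (X · ω) n ^ 2 ∂P ≤ 4 * (n * b) := by
  have hM := memLp_maxPartialSum hX
  have hsq (k : ℕ) : Integrable (fun ω => X k ω ^ 2) P := (hX k).integrable_sq
  have hSX (k : ℕ) : Integrable (fun ω => 2 * ((∑ i ∈ Finset.range k, X i ω) * X k ω)) P :=
    ((memLp_finsetSum _ fun i _ => hX i).integrable_mul (hX k)).const_mul 2
  have hMX (k : ℕ) : Integrable (fun ω => maxPartialSum (X · ω) k * X k ω) P :=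
    (hM k).integrable_mul (hX k)
  have hquad (k : ℕ) : Integrable
      (fun ω => X k ω ^ 2 + 2 * ((∑ i ∈ Finset.range k, X i ω) * X k ω)) P := (hsq k).add (hSX k)
  have hterm (k : ℕ) : Integrable (fun ω => X k ω ^ 2 +
      2 * ((∑ i ∈ Finset.range k, X i ω) * X k ω) - maxPartialSum (X · ω) k * X k ω) P :=
    (hquad k).sub (hMX k)
  calc ∫ ω, maxPartialSum (X · ω) n ^ 2 ∂P
      ≤ ∫ ω, 4 * ∑ k ∈ Finset.range n, (X k ω ^ 2 +
          2 * ((∑ i ∈ Finset.range k, X i ω) * X k ω) - maxPartialSum (X · ω) k * X k ω) ∂P :=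
        integral_mono (hM n).integrable_sq
          ((integrable_finsetSum _ fun k _ => hterm k).const_mul 4)
          fun ω => sq_maxPartialSum_le (X · ω) n
    _ = 4 * ∑ k ∈ Finset.range n, (∫ ω, X k ω ^ 2 ∂P +
          2 * ∫ ω, (∑ i ∈ Finset.range k, X i ω) * X k ω ∂P -
          ∫ ω, maxPartialSum (X · ω) k * X k ω ∂P) := by
        rw [integral_const_mul, integral_finsetSum _ fun k _ => hterm k]
        simp only [integral_sub (hquad _) (hMX _), integral_add (hsq _) (hSX _),
          integral_const_mul]
    _ ≤ 4 * (n * b) := by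
        gcongr
        simpa using Finset.sum_le_card_nsmul _ _ _ fun k hk => hb k (Finset.mem_range.1 hk)

lemma integral_sq_maxPartialSum_le (hX : ∀ i, MemLp (X i) 2 P) {c : ℕ → ℝ} (hc : ∀ d, 0 ≤ c d)
    (hXX : ∀ j k, j ≤ k → ∫ ω, X j ω * X k ω ∂P ≤ c (k - j))
    (hMX : ∀ j k, j < k → -(2 * c (k - j)) ≤
      ∫ ω, (maxPartialSum (X · ω) (j + 1) - maxPartialSum (X · ω) j) * X k ω ∂P) (n : ℕ) :
    ∫ ω, maxPartialSum (X · ω) n ^ 2 ∂P ≤ 16 * n * ∑ d ∈ Finset.range n, c d := by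
  have hM := memLp_maxPartialSum hX
  have hS_le (k : ℕ) : ∫ ω, (∑ i ∈ Finset.range k, X i ω) * X k ω ∂P ≤
      ∑ j ∈ Finset.range k, c (k - j) := by
    rw [integral_sum_mul (fun j _ => hX j) (hX k)]
    exact Finset.sum_le_sum fun j hj => hXX j k (Finset.mem_range.1 hj).le
  have hM_ge (k : ℕ) : -(2 * ∑ j ∈ Finset.range k, c (k - j)) ≤
      ∫ ω, maxPartialSum (X · ω) k * X k ω ∂P := by
    simp only [maxPartialSum_eq_sum_increments _ k]
    rw [integral_sum_mul (F := fun j ω => maxPartialSum (X · ω) (j + 1) - maxPartialSum (X · ω) j)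
      (fun j _ => (hM (j + 1)).sub (hM j)) (hX k), Finset.mul_sum, ← Finset.sum_neg_distrib]
    exact Finset.sum_le_sum fun j hj => hMX j k (Finset.mem_range.1 hj)
  refine (integral_sq_maxPartialSum_le_of_integral_terms_le hX
    (b := 4 * ∑ d ∈ Finset.range n, c d) fun k hk => ?_).trans_eq (by ring)
  have hdiag := hXX k k le_rfl
  simp only [← sq, Nat.sub_self] at hdiag
  linarith [hS_le k, hM_ge k, sum_range_comp_sub_le hc hk, hc 0]

lemma measure_exists_abs_sum_ge_le [IsFiniteMeasure P] (hX : ∀ i, MemLp (X i) 2 P) {ε : ℝ}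
    (hε : 0 < ε) (n : ℕ) :
    P {ω | ∃ k ∈ Finset.Icc 1 n, ε ≤ |∑ i ∈ Finset.range k, X i ω|} ≤
      ENNReal.ofReal ((∫ ω, maxPartialSum (X · ω) n ^ 2 ∂P +
        ∫ ω, maxPartialSum (fun i => -X i ω) n ^ 2 ∂P) / ε ^ 2) := by
  have hpos : Integrable (fun ω => maxPartialSum (X · ω) n ^ 2) P :=
    (memLp_maxPartialSum hX n).integrable_sq
  have hneg : Integrable (fun ω => maxPartialSum (fun i => -X i ω) n ^ 2) P :=
    (memLp_maxPartialSum (fun i => (hX i).neg) n).integrable_sq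
  have hsubset : {ω | ∃ k ∈ Finset.Icc 1 n, ε ≤ |∑ i ∈ Finset.range k, X i ω|} ⊆
      {ω | ε ^ 2 ≤ maxPartialSum (X · ω) n ^ 2 + maxPartialSum (fun i => -X i ω) n ^ 2} := by
    rintro ω ⟨k, hk, hkε⟩
    have hkn := (Finset.mem_Icc.1 hk).2
    rcases le_abs.1 hkε with h | h
    · exact (pow_le_pow_left₀ hε.le (h.trans (sum_range_le_maxPartialSum _ hkn)) 2).trans
        (le_add_of_nonneg_right (sq_nonneg _))
    · rw [← Finset.sum_neg_distrib] at h
      exact (pow_le_pow_left₀ hε.le (h.trans (sum_range_le_maxPartialSum _ hkn)) 2).trans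
        (le_add_of_nonneg_left (sq_nonneg _))
  have hmarkov := mul_meas_ge_le_integral_of_nonneg
    (ae_of_all P fun ω => add_nonneg (sq_nonneg (maxPartialSum (X · ω) n))
      (sq_nonneg (maxPartialSum (fun i => -X i ω) n))) (hpos.add hneg) (ε ^ 2)
  refine (measure_mono hsubset).trans ?_
  rw [← ofReal_measureReal, ← integral_add hpos hneg]
  exact ENNReal.ofReal_le_ofReal ((le_div_iff₀' (pow_pos hε 2)).2 hmarkov)

end MaxPartialSum

section MixingCoef

variable {Ω E : Type*} [MeasurableSpace Ω] [MeasurableSpace E] {P : Measure Ω}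

lemma mixingCoef_neg (ξ : ℕ → Ω → ℝ) (n : ℕ) :
    mixingCoef P (fun i ω => -ξ i ω) n = mixingCoef P ξ n := by
  have hcomap (i : ℕ) : MeasurableSpace.comap (fun ω => -ξ i ω) inferInstance =
      MeasurableSpace.comap (ξ i) inferInstance := by
    change MeasurableSpace.comap ((MeasurableEquiv.neg ℝ) ∘ ξ i) _ = _
    rw [← MeasurableSpace.comap_comp, (MeasurableEquiv.neg ℝ).measurableEmbedding.comap_eq]
  unfold mixingCoef
  congr! 9 with r k A B
  rw [biSup_congr fun i _ => hcomap i, biSup_congr fun i _ => hcomap i]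

variable [IsProbabilityMeasure P] {ξ : ℕ → Ω → E}

lemma mixingCoef_le_quarter (hξ : ∀ i, Measurable (ξ i)) (n : ℕ) : mixingCoef P ξ n ≤ 1 / 4 := by
  refine Real.sSup_le ?_ (by norm_num)
  rintro _ ⟨k, A, B, -, hB, rfl⟩
  exact abs_measureReal_inter_sub_mul_le_quarter A (iSup₂_le (fun i _ => (hξ i).comap_le) B hB)

lemma mixingLE_of_mixingCoef_le (hξ : ∀ i, Measurable (ξ i)) {j k : ℕ} (hjk : j ≤ k) {a : ℝ}
    (ha : mixingCoef P ξ (k - j) ≤ a) :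
    MixingLE (⨆ i ∈ Iic j, .comap (ξ i) inferInstance) (.comap (ξ k) inferInstance) P a := by
  intro A B hA hB
  refine ha.trans' (le_csSup ⟨1 / 4, ?_⟩ ⟨j, A, B, hA, ?_, rfl⟩)
  · rintro _ ⟨i, C, D, -, hD, rfl⟩
    exact abs_measureReal_inter_sub_mul_le_quarter C (iSup₂_le (fun l _ => (hξ l).comap_le) D hD)
  · exact le_iSup₂_of_le (f := fun i _ => MeasurableSpace.comap (ξ i) inferInstance) k
      (by simp [hjk]) le_rfl B hB

end MixingCoef

section Domination

variable {Ω Ω' : Type*} [MeasurableSpace Ω] [MeasurableSpace Ω'] {P : Measure Ω}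
  {P' : Measure Ω'} [IsProbabilityMeasure P] [IsProbabilityMeasure P'] {X Y W : Ω → ℝ} {Z : Ω' → ℝ}

lemma memLp_two_of_absTail_le (hX : Measurable X) (hZ : Measurable Z) (hZ2 : MemLp Z 2 P')
    (hXZ : ∀ u, absTail P X u ≤ absTail P' Z u) : MemLp X 2 P :=
  (memLp_two_iff_tailOverlap_lt_top hX).2
    ((tailOverlap_mono hXZ hXZ).trans_lt ((memLp_two_iff_tailOverlap_lt_top hZ).1 hZ2))

lemma abs_covariance_le_of_tailOverlap_le (hX : Measurable X) (hX2 : MemLp X 2 P)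
    (hY : Measurable Y) (hY2 : MemLp Y 2 P) (hZ : Measurable Z) (hZ2 : MemLp Z 2 P') {a c : ℝ}
    (hmix : MixingLE (.comap X inferInstance) (.comap Y inferInstance) P a) (hc : 0 ≤ c)
    (hoverlap : tailOverlap (2 * a) (absTail P X) (absTail P Y) ≤
      ENNReal.ofReal c * tailOverlap (2 * a) (absTail P' Z) (absTail P' Z)) :
    |cov[X, Y; P]| ≤ 2 * (c * ∫ t in Ioc 0 (2 * a), tailInverse (absTail P' Z) t ^ 2) := by
  have h := (enorm_covariance_le_tailOverlap hX hX2 hY hY2 hmix).trans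
    (mul_le_mul_right hoverlap 2)
  rw [tailOverlap_absTail_self hZ hZ2, ← ENNReal.ofReal_mul hc, ← ENNReal.ofReal_ofNat 2,
    ← ENNReal.ofReal_mul zero_le_two, Real.enorm_eq_ofReal_abs] at h
  exact (ENNReal.ofReal_le_ofReal_iff (by positivity)).1 h

lemma abs_covariance_le_of_absTail_le (hX : Measurable X) (hY : Measurable Y) (hZ : Measurable Z)
    (hZ2 : MemLp Z 2 P') (hXZ : ∀ u, absTail P X u ≤ absTail P' Z u)
    (hYZ : ∀ u, absTail P Y u ≤ absTail P' Z u) {a : ℝ}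
    (hmix : MixingLE (.comap X inferInstance) (.comap Y inferInstance) P a) :
    |cov[X, Y; P]| ≤ 2 * ∫ t in Ioc 0 (2 * a), tailInverse (absTail P' Z) t ^ 2 := by
  have h := abs_covariance_le_of_tailOverlap_le hX (memLp_two_of_absTail_le hX hZ hZ2 hXZ) hY
    (memLp_two_of_absTail_le hY hZ hZ2 hYZ) hZ hZ2 hmix zero_le_one
  rw [ENNReal.ofReal_one, one_mul, one_mul] at h
  exact h (tailOverlap_mono hXZ hYZ)

lemma abs_covariance_le_of_abs_le_abs_sub_mean (hX : Measurable X) (hY : Measurable Y)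
    (hW : Measurable W) (hZ : Measurable Z) (hZ2 : MemLp Z 2 P')
    (hXZ : ∀ u, absTail P X u ≤ absTail P' Z u) (hYZ : ∀ u, absTail P Y u ≤ absTail P' Z u)
    (hWX : ∀ ω, |W ω| ≤ |X ω - P[X]|) {a : ℝ}
    (hmix : MixingLE (.comap W inferInstance) (.comap Y inferInstance) P a) :
    |cov[W, Y; P]| ≤ 4 * ∫ t in Ioc 0 (2 * a), tailInverse (absTail P' Z) t ^ 2 := by
  have hX2 := memLp_two_of_absTail_le hX hZ hZ2 hXZ
  have hXc : MemLp (fun ω => X ω - P[X]) 2 P := hX2.sub (memLp_const _)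
  have hW2 : MemLp W 2 P := hXc.mono hW.aestronglyMeasurable (ae_of_all P hWX)
  have hmean : ENNReal.ofReal |P[X]| ≤ ∫⁻ u in Ioi 0, ENNReal.ofReal (absTail P' Z u) :=
    (ofReal_abs_integral_le_lintegral_absTail hX).trans
      (lintegral_mono fun u => ENNReal.ofReal_le_ofReal (hXZ u))
  have hWZ (v : ℝ) : absTail P W v ≤ absTail P' Z (v - |P[X]|) :=
    (absTail_le_absTail_sub (fun ω => (hWX ω).trans (abs_sub _ _)) v).trans (hXZ _)
  have hoverlap : tailOverlap (2 * a) (absTail P Y) (absTail P W) ≤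
      ENNReal.ofReal 2 * tailOverlap (2 * a) (absTail P' Z) (absTail P' Z) := by
    rw [ENNReal.ofReal_ofNat]
    exact (tailOverlap_mono hYZ hWZ).trans
      (tailOverlap_comp_sub_le _ antitone_absTail absTail_le_one (abs_nonneg _) hmean)
  rw [covariance_comm]
  exact (abs_covariance_le_of_tailOverlap_le hY (memLp_two_of_absTail_le hY hZ hZ2 hYZ) hW hW2
    hZ hZ2 hmix.symm zero_le_two hoverlap).trans_eq (by ring)

variable {ξ : ℕ → Ω → ℝ} {α : ℕ → ℝ}

lemma neg_le_integral_maxPartialSum_increment_mul (hξ : ∀ i, Measurable (ξ i)) (hZ : Measurable Z)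
    (hZ2 : MemLp Z 2 P') (hdom : ∀ i u, absTail P (ξ i) u ≤ absTail P' Z u) {j k : ℕ} (hjk : j < k)
    {a : ℝ} (ha : mixingCoef P ξ (k - j) ≤ a) :
    -(4 * ∫ t in Ioc 0 (2 * a), tailInverse (absTail P' Z) t ^ 2) ≤
      ∫ ω, (maxPartialSum (fun i => ξ i ω - P[ξ i]) (j + 1) -
        maxPartialSum (fun i => ξ i ω - P[ξ i]) j) * (ξ k ω - P[ξ k]) ∂P := by
  have hξ2 (i : ℕ) := memLp_two_of_absTail_le (hξ i) hZ hZ2 (hdom i)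
  have hX2 (i : ℕ) : MemLp (fun ω => ξ i ω - P[ξ i]) 2 P := (hξ2 i).sub (memLp_const _)
  have hΔ2 : MemLp (fun ω => maxPartialSum (fun i => ξ i ω - P[ξ i]) (j + 1) -
      maxPartialSum (fun i => ξ i ω - P[ξ i]) j) 2 P :=
    (memLp_maxPartialSum hX2 (j + 1)).sub (memLp_maxPartialSum hX2 j)
  have hΔ := measurable_maxPartialSum_increment ξ (fun i => P[ξ i]) j
  rw [← covariance_eq_integral_mul_sub hΔ2 (hξ2 k)]
  exact (abs_le.1 (abs_covariance_le_of_abs_le_abs_sub_mean (hξ j) (hξ k)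
    (hΔ.mono (iSup₂_le fun i _ => (hξ i).comap_le) le_rfl) hZ hZ2 (hdom j) (hdom k)
    (fun ω => abs_maxPartialSum_succ_sub_le _ j)
    ((mixingLE_of_mixingCoef_le hξ hjk.le ha).mono_left hΔ.comap_le))).1

lemma integral_sq_maxPartialSum_sub_mean_le (hξ : ∀ i, Measurable (ξ i)) (hZ : Measurable Z)
    (hZ2 : MemLp Z 2 P') (hdom : ∀ i u, absTail P (ξ i) u ≤ absTail P' Z u)
    (hα : ∀ d, mixingCoef P ξ d ≤ α d) (n : ℕ) :
    ∫ ω, maxPartialSum (fun i => ξ i ω - P[ξ i]) n ^ 2 ∂P ≤ 32 * n *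
      ∑ d ∈ Finset.range n, ∫ t in Ioc 0 (2 * α d), tailInverse (absTail P' Z) t ^ 2 := by
  have hX2 (i : ℕ) : MemLp (fun ω => ξ i ω - P[ξ i]) 2 P :=
    (memLp_two_of_absTail_le (hξ i) hZ hZ2 (hdom i)).sub (memLp_const _)
  have hmix {j k : ℕ} (hjk : j ≤ k) : MixingLE (.comap (ξ j) inferInstance)
      (.comap (ξ k) inferInstance) P (α (k - j)) :=
    (mixingLE_of_mixingCoef_le hξ hjk (hα _)).mono_left (le_iSup₂_of_le j self_mem_Iic le_rfl)
  refine (integral_sq_maxPartialSum_le hX2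
    (c := fun d => 2 * ∫ t in Ioc 0 (2 * α d), tailInverse (absTail P' Z) t ^ 2)
    (fun d => by positivity) (fun j k hjk => ?_) (fun j k hjk => ?_) n).trans_eq ?_
  · exact (le_abs_self _).trans
      (abs_covariance_le_of_absTail_le (hξ j) (hξ k) hZ hZ2 (hdom j) (hdom k) (hmix hjk))
  · refine le_trans (le_of_eq ?_)
      (neg_le_integral_maxPartialSum_increment_mul hξ hZ hZ2 hdom hjk (hα (k - j)))
    ring
  · rw [← Finset.mul_sum]
    ring

end Domination

theorem rio_maximal_inequality_general {Ω Ω' : Type*} [MeasurableSpace Ω] [MeasurableSpace Ω']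
    {P : Measure Ω} {P' : Measure Ω'} [IsProbabilityMeasure P] [IsProbabilityMeasure P']
    {ξ : ℕ → Ω → ℝ} {Z : Ω' → ℝ} {α : ℕ → ℝ} (hξ : ∀ i, Measurable (ξ i)) (hZ : Measurable Z)
    (hZ2 : MemLp Z 2 P') (hdom : ∀ i u, absTail P (ξ i) u ≤ absTail P' Z u)
    (hα : ∀ d, mixingCoef P ξ d ≤ α d) {x : ℝ} (hx : 0 < x) (n : ℕ) :
    P {ω | ∃ k ∈ Finset.Icc 1 n, 2 * x ≤ |∑ i ∈ Finset.range k, (ξ i ω - P[ξ i])|} ≤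
      ENNReal.ofReal (16 / x ^ 2 * n *
        ∑ j ∈ Finset.range n, ∫ t in Ioc 0 (2 * α j), tailInverse (absTail P' Z) t ^ 2) := by
  have hX2 (i : ℕ) : MemLp (fun ω => ξ i ω - P[ξ i]) 2 P :=
    (memLp_two_of_absTail_le (hξ i) hZ hZ2 (hdom i)).sub (memLp_const _)
  have hneg_dom (i : ℕ) (u : ℝ) : absTail P (fun ω => -ξ i ω) u ≤ absTail P' Z u := by
    simpa only [absTail, abs_neg] using hdom i u
  have hupper := integral_sq_maxPartialSum_sub_mean_le hξ hZ hZ2 hdom hα n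
  have hlower := integral_sq_maxPartialSum_sub_mean_le (fun i => (hξ i).neg) hZ hZ2 hneg_dom
    (fun d => (mixingCoef_neg ξ d).trans_le (hα d)) n
  simp only [integral_neg, ← neg_sub', Pi.neg_apply] at hlower
  refine (measure_exists_abs_sum_ge_le hX2 (mul_pos two_pos hx) n).trans
    (ENNReal.ofReal_le_ofReal ?_)
  rw [div_le_iff₀ (by positivity)]
  refine (add_le_add hupper hlower).trans_eq ?_
  field_simp
  ring

end

/-- **Rio's maximal inequality** (Theorem A.1): for identically distributed, square-integrable
random variables `ξ₁, ξ₂, …` with strong mixing coefficients `α(n)` (convention `α(0) = 1/4`),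
distribution function `G` of `|ξ₁|` and rightcontinuous inverse `Ḡ^→` of `Ḡ = 1 − G`, one has
for all `x > 0` and `n ∈ ℕ`:
`P[max_{k≤n} |∑_{i=1}^k (ξᵢ − E ξ₁)| ≥ 2x] ≤ (16/x²) n ∑_{j<n} ∫₀^{2α(j)} (Ḡ^→(t))² dt`. -/
theorem rio_maximal_inequality
    {Ω : Type*} [MeasurableSpace Ω] (P : Measure Ω) [IsProbabilityMeasure P]
    (ξ : ℕ → Ω → ℝ) (hmeas : ∀ i, Measurable (ξ i))
    (hident : ∀ i, P.map (ξ i) = P.map (ξ 0))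
    (hsq : Integrable (fun ω => (ξ 0 ω) ^ 2) P)
    -- mixing coefficients with the convention α(0) = 1/4
    (α : ℕ → ℝ) (hα0 : α 0 = 1 / 4) (hα : ∀ n : ℕ, 1 ≤ n → α n = mixingCoef P ξ n)
    -- G, Ḡ and the rightcontinuous inverse Ḡ^→(t) = sup {y ≥ 0 : Ḡ(y) > t}
    (G : ℝ → ℝ) (hG : ∀ y : ℝ, G y = ((P.map fun ω => |ξ 0 ω|) (Set.Iic y)).toReal)
    (Ginv : ℝ → ℝ) (hGinv : ∀ t : ℝ, Ginv t = sSup {y : ℝ | 0 ≤ y ∧ t < 1 - G y})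
    (x : ℝ) (hx : 0 < x) (n : ℕ) :
    P {ω : Ω | ∃ k ∈ Finset.Icc 1 n,
        2 * x ≤ |∑ i ∈ Finset.range k, (ξ i ω - ∫ ω', ξ 0 ω' ∂P)|} ≤
      ENNReal.ofReal (16 / x ^ 2 * n *
        ∑ j ∈ Finset.range n, ∫ t in Set.Ioc (0 : ℝ) (2 * α j), (Ginv t) ^ 2) := by
  have hident' (i : ℕ) : ProbabilityTheory.IdentDistrib (ξ i) (ξ 0) P P :=
    ⟨(hmeas i).aemeasurable, (hmeas 0).aemeasurable, hident i⟩
  have hdom (i : ℕ) (u : ℝ) : absTail P (ξ i) u ≤ absTail P (ξ 0) u :=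
    (congrFun (absTail_congr (hident' i)) u).le
  have hZ2 : MemLp (ξ 0) 2 P :=
    (memLp_two_iff_integrable_sq (hmeas 0).aestronglyMeasurable).2 hsq
  have hαge (d : ℕ) : mixingCoef P ξ d ≤ α d := by
    rcases d.eq_zero_or_pos with rfl | hd
    · exact (mixingCoef_le_quarter hmeas 0).trans_eq hα0.symm
    · exact (hα d hd).ge
  have hGinv' (t : ℝ) : Ginv t = tailInverse (absTail P (ξ 0)) t := by
    simp only [hGinv, hG, tailInverse, ← one_sub_measureReal_map_abs_Iic (hmeas 0), Measure.real]
  simpa only [(hident' _).integral_eq, hGinv'] using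
    rio_maximal_inequality_general hmeas (hmeas 0) hZ2 hdom hαge hx n
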